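/- arXiv:1203.1763 — 12 statements merged into one kernel-verified Lean document; each statement's English description precedes it below -/
import Mathlib

section
/- Let (X,d) be a nonempty complete metric space, α : [0,∞) → [1,∞) and β : [0,∞) → [0,1) functions such that (1) β has property (MT), and (2) there is a bounded function γ : (0,1] → [0,∞) with lim_{s→0⁺} γ(s) = 0 such that the function p(s) = s − (1−s)·γ(s) on (0,1] is essentially positive and α(t) ≤ 1 + γ(1−β(t)) for all t ≥ 0. Then α(t)·β(t) < 1 for all t > 0 (so every (α,β)-mapping is an (α,β)-contraction), and every (α,β)-mapping F of X into itself with nonempty closed values whose distance function d_F is stably positive has a fixed point x* ∈ F(x*). -/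
/-- **Theorem 1.4** (main two-parameter fixed point theorem).
If `β` has the Mizoguchi–Takahashi property and `α t ≤ 1 + γ (1 - β t)` for a bounded
function `γ : (0,1] → [0,∞)` vanishing at `0⁺` such that `p s = s - (1-s) * γ s` is
essentially positive on `(0,1]`, then `α t * β t < 1` for all `t > 0` (so every
`(α,β)`-mapping is an `(α,β)`-contraction), and every `(α,β)`-mapping of a nonempty
complete metric space into itself with nonempty closed values whose distance function
`d_F` is stably positive has a fixed point. -/
theorem two_parameter_fixed_point
    {X : Type*} [MetricSpace X] [Nonempty X] [CompleteSpace X]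
    (α β : ℝ → ℝ)
    (hα : ∀ t, 0 ≤ t → 1 ≤ α t)
    (hβ : ∀ t, 0 ≤ t → β t ∈ Set.Ico (0 : ℝ) 1)
    -- (1) β has property (MT)
    (hMT : ∀ t, 0 ≤ t → Filter.limsup β (nhdsWithin t (Set.Ioi t)) < 1)
    -- (2) the control function γ
    (γ : ℝ → ℝ)
    (hγnonneg : ∀ s ∈ Set.Ioc (0 : ℝ) 1, 0 ≤ γ s)
    (hγbdd : ∃ M : ℝ, ∀ s ∈ Set.Ioc (0 : ℝ) 1, γ s ≤ M)
    (hγlim : Filter.Tendsto γ (nhdsWithin 0 (Set.Ioc (0 : ℝ) 1)) (nhds 0))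
    -- p(s) = s - (1-s)γ(s) is essentially positive on (0,1]
    (hp : ∀ a > (0 : ℝ), ∃ m > (0 : ℝ), ∀ s ∈ Set.Ioc (0 : ℝ) 1, a ≤ s →
      m ≤ s - (1 - s) * γ s)
    (hαγ : ∀ t, 0 ≤ t → α t ≤ 1 + γ (1 - β t)) :
    (∀ t > (0 : ℝ), α t * β t < 1) ∧
    ∀ F : X → Set X,
      (∀ x, (F x).Nonempty) → (∀ x, IsClosed (F x)) →
      -- F is an (α,β)-mapping
      (∀ x : X, ∃ y ∈ F x,
        dist x y ≤ α (dist x y) * Metric.infDist x (F x) ∧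
        Metric.infDist y (F y) ≤ β (dist x y) * dist x y) →
      -- the distance function d_F is stably positive
      (∀ x : X, 0 < Metric.infDist x (F x) →
        ∃ U ∈ nhds x, ∃ m > (0 : ℝ), ∀ y ∈ U, m ≤ Metric.infDist y (F y)) →
      ∃ x : X, x ∈ F x := by
  have hs : ∀ t, 0 ≤ t → 1 - β t ∈ Set.Ioc (0 : ℝ) 1 := by
    intro t ht
    have := hβ t ht
    exact ⟨by linarith [this.2], by linarith [this.1]⟩
  have hab : ∀ t, 0 ≤ t → α t * β t ≤ 1 - ((1 - β t) - (1 - (1 - β t)) * γ (1 - β t)) := by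
    intro t ht
    have h1 := mul_le_mul_of_nonneg_right (hαγ t ht) (hβ t ht).1
    linarith
  have hab1 : ∀ t, 0 ≤ t → α t * β t < 1 := by
    intro t ht
    obtain ⟨m, hm, h⟩ := hp (1 - β t) (hs t ht).1
    have := h _ (hs t ht) le_rfl
    linarith [hab t ht]
  have hMT' : ∀ t, 0 ≤ t → ∃ δ > (0 : ℝ), ∃ b < (1 : ℝ), ∀ s, t < s → s < t + δ → β s ≤ b := by
    intro t ht
    obtain ⟨b, hb1, hb2⟩ := exists_between (hMT t ht)
    have hbd : Filter.IsBoundedUnder (· ≤ ·) (nhdsWithin t (Set.Ioi t)) β := by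
      refine ⟨1, ?_⟩
      rw [Filter.eventually_map]
      filter_upwards [self_mem_nhdsWithin] with s hs
      exact (hβ s (ht.trans (le_of_lt hs))).2.le
    have hev := Filter.eventually_lt_of_limsup_lt hb1 hbd
    obtain ⟨u, hu, hsub⟩ := mem_nhdsGT_iff_exists_Ioo_subset.1 hev
    refine ⟨u - t, sub_pos.2 hu, b, hb2, fun s h1 h2 => ?_⟩
    exact le_of_lt (hsub ⟨h1, by linarith⟩)
  refine ⟨fun t ht => hab1 t ht.le, ?_⟩
  intro F hne hcl hF hst
  by_contra hno
  have hno : ∀ x, x ∉ F x := fun x hx => hno ⟨x, hx⟩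
  have hpos : ∀ x, 0 < Metric.infDist x (F x) := fun x =>
    ((hcl x).notMem_iff_infDist_pos (hne x)).1 (hno x)
  choose f hf1 hf2 hf3 using hF
  obtain ⟨x₀⟩ := ‹Nonempty X›
  let x : ℕ → X := fun n => f^[n] x₀
  have hx : ∀ n, x (n + 1) = f (x n) := fun n => Function.iterate_succ_apply' f n x₀
  let d : ℕ → ℝ := fun n => Metric.infDist (x n) (F (x n))
  let t : ℕ → ℝ := fun n => dist (x n) (x (n + 1))
  have hd0 : ∀ n, 0 < d n := fun n => hpos _
  have hdt : ∀ n, d n ≤ t n := fun n => by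
    have := Metric.infDist_le_dist_of_mem (x := x n) (hf1 (x n))
    simpa only [d, t, hx] using this
  have ht0 : ∀ n, 0 ≤ t n := fun n => dist_nonneg
  have h2 : ∀ n, t n ≤ α (t n) * d n := fun n => by
    have := hf2 (x n)
    simpa only [d, t, hx] using this
  have h3 : ∀ n, d (n + 1) ≤ β (t n) * t n := fun n => by
    have := hf3 (x n)
    simpa only [d, t, hx] using this
  have h4 : ∀ n, d (n + 1) ≤ α (t n) * β (t n) * d n := fun n => by
    have := mul_le_mul_of_nonneg_left (h2 n) (hβ _ (ht0 n)).1
    linarith [h3 n]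
  have h5 : ∀ n, d (n + 1) < d n := fun n => by
    have := mul_lt_mul_of_pos_right (hab1 _ (ht0 n)) (hd0 n)
    linarith [h4 n]
  -- contraction when `1 - β` is bounded below
  have h6 : ∀ a > (0 : ℝ), ∃ m > (0 : ℝ), ∀ n, a ≤ 1 - β (t n) → d (n + 1) ≤ (1 - m) * d n := by
    intro a ha
    obtain ⟨m, hm, h⟩ := hp a ha
    refine ⟨m, hm, fun n hn => ?_⟩
    have e1 := h _ (hs _ (ht0 n)) hn
    have e2 := hab _ (ht0 n)
    have e3 : α (t n) * β (t n) ≤ 1 - m := by linarith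
    exact (h4 n).trans (mul_le_mul_of_nonneg_right e3 (hd0 n).le)
  have hanti : StrictAnti d := strictAnti_nat_of_succ_lt h5
  have hbdd : BddBelow (Set.range d) := ⟨0, by rintro _ ⟨n, rfl⟩; exact (hd0 n).le⟩
  obtain ⟨L, hL⟩ : ∃ L, Filter.Tendsto d Filter.atTop (nhds L) :=
    ⟨_, tendsto_atTop_ciInf hanti.antitone hbdd⟩
  have hLle : ∀ n, L < d n := fun n =>
    lt_of_le_of_lt (hanti.antitone.le_of_tendsto hL (n + 1)) (h5 n)
  have hL0 : 0 ≤ L := ge_of_tendsto' hL fun n => (hd0 n).le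
  have hLz : L = 0 := by
    by_contra hLne
    have hLp : 0 < L := lt_of_le_of_ne hL0 (Ne.symm hLne)
    obtain ⟨δ, hδ, b, hb, hβb⟩ := hMT' L hL0
    have hη : 0 < δ / (2 * L) := by positivity
    obtain ⟨ε, hε, hγε⟩ : ∃ ε > (0 : ℝ), ∀ s ∈ Set.Ioc (0 : ℝ) 1, s < ε → γ s < δ / (2 * L) := by
      have := hγlim.eventually (gt_mem_nhds hη)
      rw [eventually_nhdsWithin_iff, Metric.eventually_nhds_iff] at this
      obtain ⟨ε, hε, h⟩ := this
      refine ⟨ε, hε, fun s hs1 hs2 => h ?_ hs1⟩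
      rw [Real.dist_eq, sub_zero, abs_of_pos hs1.1]
      exact hs2
    obtain ⟨m, hm, hmn⟩ := h6 (min ε (1 - b)) (lt_min hε (by linarith))
    have e1 : ∀ᶠ n in Filter.atTop, (1 - m) * d n < L :=
      (hL.const_mul (1 - m)).eventually (gt_mem_nhds (by nlinarith))
    have e2 : ∀ᶠ n in Filter.atTop, (1 + δ / (2 * L)) * d n < L + δ := by
      refine (hL.const_mul (1 + δ / (2 * L))).eventually (gt_mem_nhds ?_)
      have : (1 + δ / (2 * L)) * L = L + δ / 2 := by field_simp
      linarith
    obtain ⟨n, g1, g2⟩ := (e1.and e2).exists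
    have g3 : 1 - β (t n) < min ε (1 - b) := by
      by_contra hc
      linarith [hmn n (not_lt.1 hc), hLle (n + 1)]
    have g4 := hγε _ (hs _ (ht0 n)) (lt_of_lt_of_le g3 (min_le_left _ _))
    have g5 : α (t n) ≤ 1 + δ / (2 * L) := by linarith [hαγ _ (ht0 n)]
    have g6 := mul_le_mul_of_nonneg_right g5 (hd0 n).le
    have g7 := hβb (t n) (by linarith [hLle n, hdt n]) (by linarith [h2 n])
    have := lt_of_lt_of_le g3 (min_le_right _ _)
    linarith
  subst hLz
  obtain ⟨M, hM⟩ := hγbdd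
  have h7 : ∀ n, t n ≤ (1 + M) * d n := fun n => by
    have e : α (t n) ≤ 1 + M := by linarith [hαγ _ (ht0 n), hM _ (hs _ (ht0 n))]
    exact (h2 n).trans (mul_le_mul_of_nonneg_right e (hd0 n).le)
  have hM0 : 0 ≤ 1 + M := by
    have := hγnonneg 1 (by norm_num)
    linarith [hM 1 (by norm_num)]
  obtain ⟨δ, hδ, b, hb, hβb⟩ := hMT' 0 le_rfl
  obtain ⟨m, hm, hmn⟩ := h6 (1 - b) (by linarith)
  have e1 : ∀ᶠ n in Filter.atTop, (1 + M) * d n < δ :=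
    (hL.const_mul (1 + M)).eventually (gt_mem_nhds (by simpa using hδ))
  obtain ⟨N, hN⟩ := Filter.eventually_atTop.1 e1
  have h8 : ∀ n, N ≤ n → d (n + 1) ≤ (1 - m) * d n := fun n hn => by
    apply hmn
    have := hβb (t n) (by linarith [hd0 n, hdt n]) (by linarith [h7 n, hN n hn])
    linarith
  have hm1 : 0 < 1 - m := by
    have := h8 N le_rfl
    exact pos_of_mul_pos_left (lt_of_lt_of_le (hd0 _) this) (hd0 N).le
  have h9 : ∀ n, d (n + N) ≤ (1 - m) ^ n * d N := by
    intro n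
    induction n with
    | zero => simp
    | succ k ih =>
      have e := h8 (k + N) (by omega)
      rw [show k + 1 + N = k + N + 1 by omega, pow_succ]
      have := mul_le_mul_of_nonneg_left ih hm1.le
      linarith
  have hcau : CauchySeq fun n => x (n + N) := by
    refine cauchySeq_of_le_geometric (1 - m) ((1 + M) * d N) (by linarith) fun n => ?_
    have e1 := h7 (n + N)
    have e2 := mul_le_mul_of_nonneg_left (h9 n) hM0
    have e3 : dist (x (n + N)) (x (n + 1 + N)) = t (n + N) := by
      rw [show n + 1 + N = n + N + 1 by omega]
    rw [e3]
    linarith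
  obtain ⟨z, hz⟩ := cauchySeq_tendsto_of_complete hcau
  obtain ⟨U, hU, r, hr, hrU⟩ := hst z (hpos z)
  have k1 := hz.eventually hU
  have k2 := ((Filter.tendsto_add_atTop_iff_nat N).2 hL).eventually (gt_mem_nhds hr)
  obtain ⟨n, q1, q2⟩ := (k1.and k2).exists
  have := hrU _ q1
  exact absurd q2 (not_lt.2 this)
end

section
/- Let (X,d) be a nonempty complete metric space, α : [0,∞) → [1,∞) nonincreasing, and β : [0,∞) → [0,1) such that the product t ↦ α(t)·β(t) has property (MT). Then every (α,β)-contraction F of X into itself with nonempty closed values whose distance function d_F is stably positive has a fixed point x* ∈ F(x*). -/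
/-- **Theorem 1.5.** If `α` is nonincreasing and the product `t ↦ α t * β t` has the
Mizoguchi–Takahashi property, then every `(α,β)`-contraction of a nonempty complete
metric space into itself with nonempty closed values whose distance function `d_F` is
stably positive has a fixed point. -/
theorem fixed_point_of_nonincreasing_alpha
    {X : Type*} [MetricSpace X] [Nonempty X] [CompleteSpace X]
    (α β : ℝ → ℝ)
    (hα : ∀ t, 0 ≤ t → 1 ≤ α t)
    (hβ : ∀ t, 0 ≤ t → β t ∈ Set.Ico (0 : ℝ) 1)
    -- α is nonincreasing on [0,∞)
    (hαmono : AntitoneOn α (Set.Ici 0))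
    -- the product α·β has property (MT)
    (hMT : ∀ t, 0 ≤ t →
      Filter.limsup (fun s => α s * β s) (nhdsWithin t (Set.Ioi t)) < 1)
    (F : X → Set X)
    (hFne : ∀ x, (F x).Nonempty) (hFcl : ∀ x, IsClosed (F x))
    -- F is an (α,β)-mapping
    (hFab : ∀ x : X, ∃ y ∈ F x,
      dist x y ≤ α (dist x y) * Metric.infDist x (F x) ∧
      Metric.infDist y (F y) ≤ β (dist x y) * dist x y)
    -- ... and in fact an (α,β)-contraction
    (hcontr : ∀ t > (0 : ℝ), α t * β t < 1)
    -- the distance function d_F is stably positive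
    (hstab : ∀ x : X, 0 < Metric.infDist x (F x) →
      ∃ U ∈ nhds x, ∃ m > (0 : ℝ), ∀ y ∈ U, m ≤ Metric.infDist y (F y)) :
    ∃ x : X, x ∈ F x := by
  classical
  by_contra hno
  push Not at hno
  choose f hfF hf1 hf2 using hFab
  obtain ⟨x0⟩ := ‹Nonempty X›
  have hdpos : ∀ x, 0 < dist x (f x) := by
    intro x
    rw [dist_pos]
    intro h
    apply hno x
    have := hfF x
    rwa [← h] at this
  have hdec : ∀ x, dist (f x) (f (f x)) < dist x (f x) := by
    intro x
    by_contra hcon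
    push Not at hcon
    have h1 : α (dist (f x) (f (f x))) ≤ α (dist x (f x)) :=
      hαmono (Set.mem_Ici.2 (hdpos x).le) (Set.mem_Ici.2 (hdpos (f x)).le) hcon
    have h0 := hα _ (hdpos (f x)).le
    have hb := (hβ _ (hdpos x).le).1
    have h2 : dist (f x) (f (f x)) ≤ α (dist x (f x)) * (β (dist x (f x)) * dist x (f x)) := by
      calc _ ≤ _ := hf1 (f x)
        _ ≤ α (dist (f x) (f (f x))) * (β (dist x (f x)) * dist x (f x)) :=
            mul_le_mul_of_nonneg_left (hf2 x) (by linarith)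
        _ ≤ _ := mul_le_mul_of_nonneg_right h1 (mul_nonneg hb (hdpos x).le)
    have h3 := mul_lt_mul_of_pos_right (hcontr _ (hdpos x)) (hdpos x)
    linarith
  have hD : ∀ x, Metric.infDist (f x) (F (f x)) ≤
      α (dist x (f x)) * β (dist x (f x)) * Metric.infDist x (F x) := by
    intro x
    have := mul_le_mul_of_nonneg_left (hf1 x) (hβ _ (hdpos x).le).1
    linarith [hf2 x]
  let u : ℕ → X := fun n => f^[n] x0
  have hu : ∀ n, u (n + 1) = f (u n) := fun n => Function.iterate_succ_apply' f n x0
  let t : ℕ → ℝ := fun n => dist (u n) (f (u n))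
  have htanti : StrictAnti t := by
    apply strictAnti_nat_of_succ_lt
    intro n
    simp only [t, hu]
    exact hdec _
  have hbdd : BddBelow (Set.range t) := ⟨0, by rintro _ ⟨n, rfl⟩; exact (hdpos _).le⟩
  have htlim := tendsto_atTop_ciInf htanti.antitone hbdd
  set l := ⨅ n, t n with hl
  have hl0 : 0 ≤ l := le_ciInf fun n => (hdpos _).le
  have htl : ∀ n, l < t n := fun n =>
    lt_of_le_of_lt (ciInf_le hbdd (n + 1)) (htanti (Nat.lt_succ_self n))
  obtain ⟨q, hq1, hq2⟩ := exists_between (hMT l hl0)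
  have hbu : Filter.IsBoundedUnder (· ≤ ·) (nhdsWithin l (Set.Ioi l)) (fun s => α s * β s) := by
    refine ⟨1, ?_⟩
    rw [Filter.eventually_map]
    filter_upwards [self_mem_nhdsWithin] with s hs
    exact (hcontr s (lt_of_le_of_lt hl0 hs)).le
  have hev := Filter.eventually_lt_of_limsup_lt hq1 hbu
  have htl' : Filter.Tendsto t Filter.atTop (nhdsWithin l (Set.Ioi l)) :=
    tendsto_nhdsWithin_iff.2 ⟨htlim, Filter.Eventually.of_forall htl⟩
  obtain ⟨N, hN⟩ := Filter.eventually_atTop.1 (htl'.eventually hev)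
  have hq0 : 0 ≤ q := by
    have h1 := hN N le_rfl
    have h2 := hα (t N) (hdpos _).le
    have h3 := (hβ (t N) (hdpos _).le).1
    have h4 : 0 ≤ α (t N) * β (t N) := mul_nonneg (by linarith) h3
    linarith
  have hgeo : ∀ k, Metric.infDist (u (N + k)) (F (u (N + k))) ≤
      Metric.infDist (u N) (F (u N)) * q ^ k := by
    intro k
    induction k with
    | zero => simp
    | succ k ih =>
      rw [← add_assoc, hu]
      have h1 := hD (u (N + k))
      have h2 := mul_le_mul_of_nonneg_right (hN (N + k) (Nat.le_add_right _ _)).le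
        (Metric.infDist_nonneg (x := u (N + k)) (s := F (u (N + k))))
      have h3 := mul_le_mul_of_nonneg_left ih hq0
      rw [pow_succ]
      simp only [t] at h2
      linarith
  have hstep : ∀ k, dist (u (N + k)) (u (N + (k + 1))) ≤
      (α 0 * Metric.infDist (u N) (F (u N))) * q ^ k := by
    intro k
    rw [← add_assoc, hu]
    have h1 : α (dist (u (N + k)) (f (u (N + k)))) ≤ α 0 :=
      hαmono (Set.mem_Ici.2 le_rfl) (Set.mem_Ici.2 (hdpos _).le) (hdpos _).le
    have h0 := hα 0 le_rfl
    calc _ ≤ _ := hf1 _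
      _ ≤ α 0 * Metric.infDist (u (N + k)) (F (u (N + k))) :=
          mul_le_mul_of_nonneg_right h1 Metric.infDist_nonneg
      _ ≤ α 0 * (Metric.infDist (u N) (F (u N)) * q ^ k) :=
          mul_le_mul_of_nonneg_left (hgeo k) (by linarith)
      _ = _ := by ring
  have hc : CauchySeq (fun k => u (N + k)) := cauchySeq_of_le_geometric q _ hq2 hstep
  obtain ⟨z, hz⟩ := cauchySeq_tendsto_of_complete hc
  have hzpos : 0 < Metric.infDist z (F z) :=
    ((hFcl z).notMem_iff_infDist_pos (hFne z)).1 (hno z)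
  obtain ⟨U, hU, m, hm, hUm⟩ := hstab z hzpos
  have hlim : Filter.Tendsto (fun k : ℕ => Metric.infDist (u N) (F (u N)) * q ^ k)
      Filter.atTop (nhds 0) := by
    simpa using (tendsto_pow_atTop_nhds_zero_of_lt_one hq0 hq2).const_mul
      (Metric.infDist (u N) (F (u N)))
  obtain ⟨k, hk1, hk2⟩ := ((hz.eventually hU).and (hlim.eventually (gt_mem_nhds hm))).exists
  have := hUm _ hk1
  linarith [hgeo k]
end

section
/- Let α : [0,∞) → [1,∞) and β : [0,∞) → [0,1) be such that β has property (MT), and suppose there is a bounded function γ : (0,1] → [0,∞) with lim_{s→0⁺} γ(s) = 0 such that p(s) = s − (1−s)·γ(s) is essentially positive on (0,1] and α(t) ≤ 1 + γ(1−β(t)) for all t ≥ 0. Then the product t ↦ α(t)·β(t) has property (MT), i.e. limsup_{s→t⁺} α(s)·β(s) < 1 for every t ≥ 0. -/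
/-- **Lemma 2.1.** Under the hypotheses of Theorem 1.4 on `α`, `β` and `γ`, the product
`t ↦ α t * β t` has the Mizoguchi–Takahashi property:
`limsup_{s→t⁺} α(s)β(s) < 1` for every `t ≥ 0`. -/
theorem product_has_MT_property
    (α β : ℝ → ℝ)
    (hα : ∀ t, 0 ≤ t → 1 ≤ α t)
    (hβ : ∀ t, 0 ≤ t → β t ∈ Set.Ico (0 : ℝ) 1)
    -- β has property (MT)
    (hMT : ∀ t, 0 ≤ t → Filter.limsup β (nhdsWithin t (Set.Ioi t)) < 1)
    -- the control function γ
    (γ : ℝ → ℝ)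
    (hγnonneg : ∀ s ∈ Set.Ioc (0 : ℝ) 1, 0 ≤ γ s)
    (hγbdd : ∃ M : ℝ, ∀ s ∈ Set.Ioc (0 : ℝ) 1, γ s ≤ M)
    (hγlim : Filter.Tendsto γ (nhdsWithin 0 (Set.Ioc (0 : ℝ) 1)) (nhds 0))
    -- p(s) = s - (1-s)γ(s) is essentially positive on (0,1]
    (hp : ∀ a > (0 : ℝ), ∃ m > (0 : ℝ), ∀ s ∈ Set.Ioc (0 : ℝ) 1, a ≤ s →
      m ≤ s - (1 - s) * γ s)
    (hαγ : ∀ t, 0 ≤ t → α t ≤ 1 + γ (1 - β t)) :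
    ∀ t, 0 ≤ t →
      Filter.limsup (fun s => α s * β s) (nhdsWithin t (Set.Ioi t)) < 1 := by
  intro t ht
  have hpos : ∀ᶠ s in nhdsWithin t (Set.Ioi t), 0 ≤ s := by
    filter_upwards [self_mem_nhdsWithin] with s hs
    exact ht.trans (le_of_lt hs)
  obtain ⟨c, hc1, hc2⟩ := exists_between (hMT t ht)
  have hbdd : Filter.IsBoundedUnder (· ≤ ·) (nhdsWithin t (Set.Ioi t)) β := by
    refine Filter.isBoundedUnder_of_eventually_le (a := 1) ?_
    filter_upwards [hpos] with s hs
    exact (hβ s hs).2.le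
  have hev := Filter.eventually_lt_of_limsup_lt hc1 hbdd
  obtain ⟨m, hm, hmp⟩ := hp (1 - c) (by linarith)
  have hle : Filter.limsup (fun s => α s * β s) (nhdsWithin t (Set.Ioi t)) ≤ 1 - m := by
    refine Filter.limsup_le_of_le ?_ ?_
    · refine Filter.IsBoundedUnder.isCoboundedUnder_le ?_
      refine Filter.isBoundedUnder_of_eventually_ge (a := 0) ?_
      filter_upwards [hpos] with s hs
      exact mul_nonneg (zero_le_one.trans (hα s hs)) (hβ s hs).1
    · filter_upwards [hpos, hev] with s hs hsc
      obtain ⟨h0, h1⟩ := hβ s hs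
      have h2 := hmp (1 - β s) ⟨by linarith, by linarith⟩ (by linarith)
      have h3 := mul_le_mul_of_nonneg_right (hαγ s hs) h0
      linarith
  linarith
end

section
/- Let α : [0,∞) → [1,∞) and β : [0,∞) → [0,1) be such that there is a bounded function γ : (0,1] → [0,∞) with lim_{s→0⁺} γ(s) = 0 such that p(s) = s − (1−s)·γ(s) is essentially positive on (0,1] and α(t) ≤ 1 + γ(1−β(t)) for all t ≥ 0. Then for every ε > 0 there exists Q_ε < 1 such that α(t)·β(t) ≤ Q_ε for every t ≥ 0 with α(t) ≥ 1 + ε. -/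
/-- **Lemma 2.2.** Under the hypotheses of Theorem 1.4 on `α`, `β` and `γ`, for every
`ε > 0` there is `Q_ε < 1` bounding `α t * β t` for all `t ≥ 0` with `α t ≥ 1 + ε`. -/
theorem product_bound_where_alpha_large
    (α β : ℝ → ℝ)
    (hα : ∀ t, 0 ≤ t → 1 ≤ α t)
    (hβ : ∀ t, 0 ≤ t → β t ∈ Set.Ico (0 : ℝ) 1)
    -- the control function γ
    (γ : ℝ → ℝ)
    (hγnonneg : ∀ s ∈ Set.Ioc (0 : ℝ) 1, 0 ≤ γ s)
    (hγbdd : ∃ M : ℝ, ∀ s ∈ Set.Ioc (0 : ℝ) 1, γ s ≤ M)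
    (hγlim : Filter.Tendsto γ (nhdsWithin 0 (Set.Ioc (0 : ℝ) 1)) (nhds 0))
    -- p(s) = s - (1-s)γ(s) is essentially positive on (0,1]
    (hp : ∀ a > (0 : ℝ), ∃ m > (0 : ℝ), ∀ s ∈ Set.Ioc (0 : ℝ) 1, a ≤ s →
      m ≤ s - (1 - s) * γ s)
    (hαγ : ∀ t, 0 ≤ t → α t ≤ 1 + γ (1 - β t)) :
    ∀ ε > (0 : ℝ), ∃ Q : ℝ, Q < 1 ∧
      ∀ t, 0 ≤ t → 1 + ε ≤ α t → α t * β t ≤ Q := by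
  intro ε hε
  obtain ⟨δ, hδ, h⟩ := Metric.tendsto_nhdsWithin_nhds.mp hγlim ε hε
  obtain ⟨m, hm, hpm⟩ := hp δ hδ
  refine ⟨1 - m, by linarith, fun t ht hεt => ?_⟩
  obtain ⟨hb0, hb1⟩ := hβ t ht
  have hs : 1 - β t ∈ Set.Ioc (0 : ℝ) 1 := ⟨by linarith, by linarith⟩
  have hle := hαγ t ht
  have hδs : δ ≤ 1 - β t := by
    by_contra hlt
    have h1 := h hs (by
      rw [Real.dist_eq, sub_zero, abs_of_pos hs.1]
      exact not_le.mp hlt)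
    rw [Real.dist_eq, sub_zero] at h1
    have h2 := le_abs_self (γ (1 - β t))
    linarith
  have h3 := hpm _ hs hδs
  have h4 := mul_le_mul_of_nonneg_right hle hb0
  nlinarith
end

section
/- Let (X,d) be a metric space, and let α : [0,∞) → [1,∞) and β : [0,∞) → [0,1) be such that there is a bounded function γ : (0,1] → [0,∞) with lim_{s→0⁺} γ(s) = 0 such that p(s) = s − (1−s)·γ(s) is essentially positive on (0,1] and α(t) ≤ 1 + γ(1−β(t)) for all t ≥ 0. Let F map X into nonempty closed subsets of X and let (x_n) be a sequence with x_{n+1} ∈ F(x_n) satisfying, with d_n = d(x_n,x_{n+1}): d_n ≤ α(d_n)·d_F(x_n) and d_F(x_{n+1}) ≤ β(d_n)·d_n for all n. Then d_F(x_{n+1}) ≤ (1 − p(1−β(d_n)))·d_F(x_n) ≤ d_F(x_n) for all n; in particular the sequence (d_F(x_n)) is nonincreasing and converges to a nonnegative limit. -/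
/-- **Lemma 2.4.** For a sequence as in Lemma 2.3, with `p(s) = s - (1-s)·γ(s)` one has
`d_F(x_{n+1}) ≤ (1 - p(1 - β(dₙ))) · d_F(xₙ) ≤ d_F(xₙ)`; in particular the sequence
`(d_F(xₙ))` is nonincreasing and converges to a nonnegative limit. -/
theorem distance_sequence_decreasing
    {X : Type*} [MetricSpace X]
    (α β : ℝ → ℝ)
    (hα : ∀ t, 0 ≤ t → 1 ≤ α t)
    (hβ : ∀ t, 0 ≤ t → β t ∈ Set.Ico (0 : ℝ) 1)
    -- the control function γ
    (γ : ℝ → ℝ)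
    (hγnonneg : ∀ s ∈ Set.Ioc (0 : ℝ) 1, 0 ≤ γ s)
    (hγbdd : ∃ M : ℝ, ∀ s ∈ Set.Ioc (0 : ℝ) 1, γ s ≤ M)
    (hγlim : Filter.Tendsto γ (nhdsWithin 0 (Set.Ioc (0 : ℝ) 1)) (nhds 0))
    -- p(s) = s - (1-s)γ(s) is essentially positive on (0,1]
    (hp : ∀ a > (0 : ℝ), ∃ m > (0 : ℝ), ∀ s ∈ Set.Ioc (0 : ℝ) 1, a ≤ s →
      m ≤ s - (1 - s) * γ s)
    (hαγ : ∀ t, 0 ≤ t → α t ≤ 1 + γ (1 - β t))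
    (F : X → Set X)
    (hFne : ∀ x, (F x).Nonempty) (hFcl : ∀ x, IsClosed (F x))
    (x : ℕ → X)
    (horbit : ∀ n : ℕ, x (n + 1) ∈ F (x n))
    (hA : ∀ n : ℕ, dist (x n) (x (n + 1)) ≤
      α (dist (x n) (x (n + 1))) * Metric.infDist (x n) (F (x n)))
    (hB : ∀ n : ℕ, Metric.infDist (x (n + 1)) (F (x (n + 1))) ≤
      β (dist (x n) (x (n + 1))) * dist (x n) (x (n + 1))) :
    (∀ n : ℕ,
      Metric.infDist (x (n + 1)) (F (x (n + 1))) ≤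
        (1 - ((1 - β (dist (x n) (x (n + 1)))) -
          (1 - (1 - β (dist (x n) (x (n + 1))))) *
            γ (1 - β (dist (x n) (x (n + 1)))))) *
          Metric.infDist (x n) (F (x n)) ∧
      (1 - ((1 - β (dist (x n) (x (n + 1)))) -
          (1 - (1 - β (dist (x n) (x (n + 1))))) *
            γ (1 - β (dist (x n) (x (n + 1)))))) *
          Metric.infDist (x n) (F (x n)) ≤ Metric.infDist (x n) (F (x n))) ∧
    Antitone (fun n : ℕ => Metric.infDist (x n) (F (x n))) ∧
    ∃ L : ℝ, 0 ≤ L ∧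
      Filter.Tendsto (fun n : ℕ => Metric.infDist (x n) (F (x n)))
        Filter.atTop (nhds L) := by
  have key : ∀ n : ℕ,
      Metric.infDist (x (n + 1)) (F (x (n + 1))) ≤
        (1 - ((1 - β (dist (x n) (x (n + 1)))) -
          (1 - (1 - β (dist (x n) (x (n + 1))))) *
            γ (1 - β (dist (x n) (x (n + 1)))))) *
          Metric.infDist (x n) (F (x n)) ∧
      (1 - ((1 - β (dist (x n) (x (n + 1)))) -
          (1 - (1 - β (dist (x n) (x (n + 1))))) *
            γ (1 - β (dist (x n) (x (n + 1)))))) *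
          Metric.infDist (x n) (F (x n)) ≤ Metric.infDist (x n) (F (x n)) := by
    intro n
    have h1 := hA n
    have h2 := hB n
    have hD : 0 ≤ Metric.infDist (x n) (F (x n)) := Metric.infDist_nonneg
    have ht : 0 ≤ dist (x n) (x (n + 1)) := dist_nonneg
    generalize dist (x n) (x (n + 1)) = t at *
    generalize Metric.infDist (x n) (F (x n)) = D at *
    obtain ⟨hb0, hb1⟩ := hβ t ht
    have h3 := hαγ t ht
    obtain ⟨m, hm, hms⟩ := hp (1 - β t) (by linarith)
    have h4 := hms (1 - β t) ⟨by linarith, by linarith⟩ le_rfl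
    constructor
    · have h5 : t ≤ (1 + γ (1 - β t)) * D := h1.trans (mul_le_mul_of_nonneg_right h3 hD)
      have h6 := mul_le_mul_of_nonneg_left h5 hb0
      linarith
    · exact mul_le_of_le_one_left hD (by linarith)
  have hanti : Antitone (fun n : ℕ => Metric.infDist (x n) (F (x n))) :=
    antitone_nat_of_succ_le fun n => (key n).1.trans (key n).2
  refine ⟨key, hanti, _, ?_, tendsto_atTop_ciInf hanti ⟨0, ?_⟩⟩
  · exact le_ciInf fun n => Metric.infDist_nonneg
  · rintro _ ⟨n, rfl⟩
    exact Metric.infDist_nonneg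
end

section
/- Let (X,d) be a metric space, and let α : [0,∞) → [1,∞) and β : [0,∞) → [0,1) be such that β has property (MT) and there is a bounded function γ : (0,1] → [0,∞) with lim_{s→0⁺} γ(s) = 0 such that p(s) = s − (1−s)·γ(s) is essentially positive on (0,1] and α(t) ≤ 1 + γ(1−β(t)) for all t ≥ 0. Let F map X into nonempty closed subsets of X and let (x_n) be a sequence with x_{n+1} ∈ F(x_n) satisfying, with d_n = d(x_n,x_{n+1}): d_n ≤ α(d_n)·d_F(x_n) and d_F(x_{n+1}) ≤ β(d_n)·d_n for all n. Then (x_n) is a Cauchy sequence in X. -/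
/-- **Lemma 2.5.** For a sequence as in Lemma 2.3 (under the hypotheses of
Theorem 1.4), the sequence `(xₙ)` is a Cauchy (fundamental) sequence. -/
theorem approximating_sequence_is_cauchy
    {X : Type*} [MetricSpace X]
    (α β : ℝ → ℝ)
    (hα : ∀ t, 0 ≤ t → 1 ≤ α t)
    (hβ : ∀ t, 0 ≤ t → β t ∈ Set.Ico (0 : ℝ) 1)
    -- β has property (MT)
    (hMT : ∀ t, 0 ≤ t → Filter.limsup β (nhdsWithin t (Set.Ioi t)) < 1)
    -- the control function γ
    (γ : ℝ → ℝ)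
    (hγnonneg : ∀ s ∈ Set.Ioc (0 : ℝ) 1, 0 ≤ γ s)
    (hγbdd : ∃ M : ℝ, ∀ s ∈ Set.Ioc (0 : ℝ) 1, γ s ≤ M)
    (hγlim : Filter.Tendsto γ (nhdsWithin 0 (Set.Ioc (0 : ℝ) 1)) (nhds 0))
    -- p(s) = s - (1-s)γ(s) is essentially positive on (0,1]
    (hp : ∀ a > (0 : ℝ), ∃ m > (0 : ℝ), ∀ s ∈ Set.Ioc (0 : ℝ) 1, a ≤ s →
      m ≤ s - (1 - s) * γ s)
    (hαγ : ∀ t, 0 ≤ t → α t ≤ 1 + γ (1 - β t))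
    (F : X → Set X)
    (hFne : ∀ x, (F x).Nonempty) (hFcl : ∀ x, IsClosed (F x))
    (x : ℕ → X)
    (horbit : ∀ n : ℕ, x (n + 1) ∈ F (x n))
    (hA : ∀ n : ℕ, dist (x n) (x (n + 1)) ≤
      α (dist (x n) (x (n + 1))) * Metric.infDist (x n) (F (x n)))
    (hB : ∀ n : ℕ, Metric.infDist (x (n + 1)) (F (x (n + 1))) ≤
      β (dist (x n) (x (n + 1))) * dist (x n) (x (n + 1))) :
    CauchySeq x := by
  obtain ⟨M, hM⟩ := hγbdd
  set d : ℕ → ℝ := fun n => dist (x n) (x (n + 1)) with hd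
  set e : ℕ → ℝ := fun n => Metric.infDist (x n) (F (x n)) with he
  have hd0 : ∀ n, 0 ≤ d n := fun n => dist_nonneg
  have he0 : ∀ n, 0 ≤ e n := fun n => Metric.infDist_nonneg
  have hed : ∀ n, e n ≤ d n := fun n => Metric.infDist_le_dist_of_mem (horbit n)
  have hA' : ∀ n, d n ≤ α (d n) * e n := hA
  have hB' : ∀ n, e (n + 1) ≤ β (d n) * d n := hB
  have hs : ∀ n, 1 - β (d n) ∈ Set.Ioc (0 : ℝ) 1 := fun n => by
    have := hβ (d n) (hd0 n)
    exact ⟨by linarith [this.2], by linarith [this.1]⟩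
  have hdγ : ∀ n, d n ≤ (1 + γ (1 - β (d n))) * e n := fun n =>
    (hA' n).trans (mul_le_mul_of_nonneg_right (hαγ _ (hd0 n)) (he0 n))
  have hstep : ∀ n, e (n + 1) ≤
      (1 - ((1 - β (d n)) - (1 - (1 - β (d n))) * γ (1 - β (d n)))) * e n := fun n => by
    have h1 := mul_le_mul_of_nonneg_left (hdγ n) (hβ (d n) (hd0 n)).1
    have h2 := hB' n
    nlinarith
  have hanti : Antitone e := antitone_nat_of_succ_le fun n => by
    obtain ⟨m, hm, h⟩ := hp (1 - β (d n)) (hs n).1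
    have h1 := h _ (hs n) le_rfl
    have h2 := hstep n
    nlinarith [mul_nonneg (hm.le.trans h1) (he0 n)]
  have hbb : BddBelow (Set.range e) := ⟨0, by rintro _ ⟨n, rfl⟩; exact he0 n⟩
  have hlim := tendsto_atTop_ciInf hanti hbb
  have hle : ∀ n, (⨅ i, e i) ≤ e n := fun n => ciInf_le hbb n
  have hL0 : 0 ≤ ⨅ i, e i := le_ciInf he0
  generalize (⨅ i, e i) = L at hlim hle hL0
  -- property (MT) at the limit
  obtain ⟨q, hq1, hq2⟩ := exists_between (hMT L hL0)
  have hbd : Filter.IsBoundedUnder (· ≤ ·) (nhdsWithin L (Set.Ioi L)) β :=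
    ⟨1, Filter.eventually_map.2 (by
      filter_upwards [self_mem_nhdsWithin] with t ht
      exact (hβ t (hL0.trans (le_of_lt ht))).2.le)⟩
  have hev := Filter.eventually_lt_of_limsup_lt hq1 hbd
  obtain ⟨u, hu, hu'⟩ := (mem_nhdsGT_iff_exists_Ioo_subset).1 hev
  have hu : L < u := hu
  -- choose the threshold for `γ`
  have hε : 0 < (u - L) / 2 / (L + 1) := by
    apply div_pos <;> linarith
  have hγev := hγlim.eventually (gt_mem_nhds hε)
  rw [Filter.Eventually, Metric.mem_nhdsWithin_iff] at hγev
  obtain ⟨c, hc, hc'⟩ := hγev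
  obtain ⟨a, ha0, hac, haq, haL⟩ : ∃ a > 0, a ≤ c ∧ a ≤ 1 - q ∧ a ≤ 1 - β L :=
    ⟨min c (min (1 - q) (1 - β L)),
      lt_min hc (lt_min (by linarith) (by linarith [(hβ L hL0).2])),
      min_le_left _ _, (min_le_right _ _).trans (min_le_left _ _),
      (min_le_right _ _).trans (min_le_right _ _)⟩
  have hkey : ∀ᶠ n in Filter.atTop, a ≤ 1 - β (d n) := by
    filter_upwards [hlim.eventually (gt_mem_nhds (show L < L + (u - L) / 2 by linarith)),
      hlim.eventually (gt_mem_nhds (show L < L + 1 by linarith))] with n h1 h2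
    by_contra! hlt
    have hγn : γ (1 - β (d n)) < (u - L) / 2 / (L + 1) := by
      refine hc' ⟨?_, hs n⟩
      rw [Metric.mem_ball, Real.dist_eq, sub_zero, abs_of_pos (hs n).1]
      linarith
    rw [lt_div_iff₀ (by linarith)] at hγn
    have h3 := mul_le_mul_of_nonneg_left h2.le (hγnonneg _ (hs n))
    have h4 := hdγ n
    have h5 : d n < u := by nlinarith
    rcases ((hle n).trans (hed n)).eq_or_lt with h | h
    · rw [← h] at hlt
      linarith
    · have h6 : β (d n) < q := hu' ⟨h, h5⟩
      linarith
  obtain ⟨m, hm, hpm⟩ := hp a ha0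
  have hsum : Summable e := by
    refine summable_of_ratio_norm_eventually_le (r := 1 - m) (by linarith) ?_
    filter_upwards [hkey] with n hn
    rw [Real.norm_of_nonneg (he0 _), Real.norm_of_nonneg (he0 _)]
    refine (hstep n).trans (mul_le_mul_of_nonneg_right ?_ (he0 n))
    linarith [hpm _ (hs n) hn]
  refine cauchySeq_of_summable_dist
    (Summable.of_nonneg_of_le hd0 (fun n => ?_) (hsum.mul_left (1 + M)))
  exact (hdγ n).trans (mul_le_mul_of_nonneg_right (by linarith [hM _ (hs n)]) (he0 n))
end

section
/- Let F be the multivalued map of [0,1] (with the usual metric) into itself defined by F(x) = {2x/3} for 0 ≤ x < 3/4, F(x) = {1/2} for 3/4 ≤ x < 1, and F(1) = {1/3, 3/4}. Then for no function β : [0,∞) → [0,1) is F a (2−β, β)-contraction, where (2−β)(t) = 2 − β(t); indeed, for x = 1 no point y ∈ F(1) satisfies both conditions (A) and (B) of an (α,β)-mapping with α = 2−β. -/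
/-- **Example 1.7 (1).** The finite-valued mapping `F` of `[0,1]` into itself with
`F x = {2x/3}` for `0 ≤ x < 3/4`, `F x = {1/2}` for `3/4 ≤ x < 1` and
`F 1 = {1/3, 3/4}` is not a `(2-β, β)`-contraction for any `β : [0,∞) → [0,1)`;
indeed, at `x = 1` no point `y ∈ F 1` satisfies both conditions (A) and (B) with
`α = 2 - β`. -/
theorem example_not_two_minus_beta_contraction
    (F : ℝ → Set ℝ)
    (hF₁ : ∀ x : ℝ, 0 ≤ x → x < 3 / 4 → F x = {2 * x / 3})
    (hF₂ : ∀ x : ℝ, 3 / 4 ≤ x → x < 1 → F x = {1 / 2})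
    (hF₃ : F 1 = {1 / 3, 3 / 4}) :
    ∀ β : ℝ → ℝ, (∀ t, 0 ≤ t → β t ∈ Set.Ico (0 : ℝ) 1) →
      -- no y ∈ F 1 satisfies both (A) and (B) with α = 2 - β
      (¬ ∃ y ∈ F 1,
        dist (1 : ℝ) y ≤ (2 - β (dist (1 : ℝ) y)) * Metric.infDist 1 (F 1) ∧
        Metric.infDist y (F y) ≤ β (dist (1 : ℝ) y) * dist (1 : ℝ) y) ∧
      -- hence F is not a (2-β, β)-contraction
      ¬ ((∀ x ∈ Set.Icc (0 : ℝ) 1, ∃ y ∈ F x,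
            dist x y ≤ (2 - β (dist x y)) * Metric.infDist x (F x) ∧
            Metric.infDist y (F y) ≤ β (dist x y) * dist x y) ∧
          ∀ t > (0 : ℝ), (2 - β t) * β t < 1) := by
  intro β hβ
  have key : ¬ ∃ y ∈ F 1,
        dist (1 : ℝ) y ≤ (2 - β (dist (1 : ℝ) y)) * Metric.infDist 1 (F 1) ∧
        Metric.infDist y (F y) ≤ β (dist (1 : ℝ) y) * dist (1 : ℝ) y := by
    rintro ⟨y, hy, hA, hB⟩
    have hb := hβ (dist (1 : ℝ) y) dist_nonneg
    have hd : Metric.infDist 1 (F 1) ≤ 1 / 4 := by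
      have h : (3 / 4 : ℝ) ∈ F 1 := by rw [hF₃]; simp
      refine (Metric.infDist_le_dist_of_mem h).trans ?_
      rw [Real.dist_eq, abs_of_nonneg] <;> norm_num
    have hd0 : 0 ≤ Metric.infDist 1 (F 1) := Metric.infDist_nonneg
    obtain ⟨hb0, hb1⟩ := hb
    generalize β (dist (1 : ℝ) y) = b at *
    rw [hF₃] at hy
    rcases hy with rfl | hy
    · have e : dist (1 : ℝ) (1 / 3) = 2 / 3 := by
        rw [Real.dist_eq, abs_of_nonneg] <;> norm_num
      rw [e] at hA
      nlinarith
    · have hy' : y = 3 / 4 := hy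
      subst hy'
      have e : dist (1 : ℝ) (3 / 4) = 1 / 4 := by
        rw [Real.dist_eq, abs_of_nonneg] <;> norm_num
      have e2 : dist (3 / 4 : ℝ) (1 / 2) = 1 / 4 := by
        rw [Real.dist_eq, abs_of_nonneg] <;> norm_num
      rw [hF₂ (3 / 4) le_rfl (by norm_num), Metric.infDist_singleton, e, e2] at hB
      linarith
  exact ⟨key, fun h => key (h.1 1 (by simp))⟩
end

section
/- Let F be the multivalued map of [0,1] (with the usual metric) into itself defined by F(x) = {2x/3} for 0 ≤ x < 3/4, F(x) = {1/2} for 3/4 ≤ x < 1, and F(1) = {1/3, 3/4}. Then for no constant a > 1 and no function β : [0,∞) → [0,1) is F an (a, β)-contraction, where a denotes the constant function α(t) = a. -/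
/-- **Example 1.7 (2).** The finite-valued mapping `F` of `[0,1]` into itself with
`F x = {2x/3}` for `0 ≤ x < 3/4`, `F x = {1/2}` for `3/4 ≤ x < 1` and
`F 1 = {1/3, 3/4}` is not an `(a, β)`-contraction for any constant `a > 1` and any
`β : [0,∞) → [0,1)`. -/
theorem example_not_constant_alpha_contraction
    (F : ℝ → Set ℝ)
    (hF₁ : ∀ x : ℝ, 0 ≤ x → x < 3 / 4 → F x = {2 * x / 3})
    (hF₂ : ∀ x : ℝ, 3 / 4 ≤ x → x < 1 → F x = {1 / 2})
    (hF₃ : F 1 = {1 / 3, 3 / 4}) :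
    ∀ a : ℝ, 1 < a →
    ∀ β : ℝ → ℝ, (∀ t, 0 ≤ t → β t ∈ Set.Ico (0 : ℝ) 1) →
      ¬ ((∀ x ∈ Set.Icc (0 : ℝ) 1, ∃ y ∈ F x,
            dist x y ≤ a * Metric.infDist x (F x) ∧
            Metric.infDist y (F y) ≤ β (dist x y) * dist x y) ∧
          ∀ t > (0 : ℝ), a * β t < 1) := by
  intro a ha β hβ
  rintro ⟨h, hab⟩
  have e1 := hF₁ (3 / 10) (by norm_num) (by norm_num)
  have e2 := hF₁ (1 / 5) (by norm_num) (by norm_num)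
  have e3 := hF₂ (3 / 4) (by norm_num) (by norm_num)
  have hb : 2 / 3 ≤ β (1 / 10) := by
    obtain ⟨y, hy, -, h2⟩ := h (3 / 10) ⟨by norm_num, by norm_num⟩
    rw [e1, Set.mem_singleton_iff] at hy
    have hy' : y = 1 / 5 := by rw [hy]; norm_num
    subst hy'
    have d1 : dist (3 / 10 : ℝ) (1 / 5) = 1 / 10 := by
      rw [Real.dist_eq, abs_of_pos] <;> norm_num
    have d2 : dist (1 / 5 : ℝ) (2 * (1 / 5) / 3) = 1 / 15 := by
      rw [Real.dist_eq, abs_of_pos] <;> norm_num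
    rw [e2, Metric.infDist_singleton, d1, d2] at h2
    linarith
  have hlt := hab (1 / 10) (by norm_num)
  obtain ⟨y, hy, h1, h2⟩ := h 1 ⟨by norm_num, by norm_num⟩
  have d4 : dist (1 : ℝ) (3 / 4) = 1 / 4 := by
    rw [Real.dist_eq, abs_of_pos] <;> norm_num
  rw [hF₃] at hy h1
  rcases hy with hy | hy
  · subst hy
    have d3 : dist (1 : ℝ) (1 / 3) = 2 / 3 := by
      rw [Real.dist_eq, abs_of_pos] <;> norm_num
    have hle : Metric.infDist (1 : ℝ) {1 / 3, 3 / 4} ≤ 1 / 4 := by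
      rw [← d4]
      exact Metric.infDist_le_dist_of_mem (by simp)
    rw [d3] at h1
    have : 8 / 3 ≤ a := by nlinarith
    nlinarith
  · rw [Set.mem_singleton_iff] at hy
    subst hy
    have d5 : dist (3 / 4 : ℝ) (1 / 2) = 1 / 4 := by
      rw [Real.dist_eq, abs_of_pos] <;> norm_num
    rw [e3, Metric.infDist_singleton, d4, d5] at h2
    have := (hβ (1 / 4) (by norm_num)).2
    linarith
end

section
/- Let F be the multivalued map of [0,1] (with the usual metric) into itself defined by F(x) = {2x/3} for 0 ≤ x < 3/4, F(x) = {1/2} for 3/4 ≤ x < 1, and F(1) = {1/3, 3/4}. Define α : [0,∞) → [1,∞) by α(t) = 4/3 for 0 ≤ t ≤ 1/2 and α(t) = 8/3 for t > 1/2, and β : [0,∞) → [0,1) by β(t) = 2/3 for 0 ≤ t ≤ 1/3, β(t) = 1/2 for 1/3 < t ≤ 1/2, and β(t) = 1/3 for t > 1/2. Then F is an (α,β)-contraction, and moreover β has property (MT) and α(t) ≤ 1 + γ(1−β(t)) for all t ≥ 0, where γ : (0,1] → [0,∞) is given by γ(1/3) = γ(1/2) = 1/3, γ(2/3) = 5/3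 and γ(t) = 0 otherwise; γ is bounded with lim_{s→0⁺} γ(s) = 0 and p(s) = s − (1−s)γ(s) is essentially positive on (0,1]. -/
/-- **Example 1.7 (3).** The finite-valued mapping `F` of `[0,1]` into itself with
`F x = {2x/3}` for `0 ≤ x < 3/4`, `F x = {1/2}` for `3/4 ≤ x < 1` and
`F 1 = {1/3, 3/4}` is an `(α, β)`-contraction for the indicated piecewise constant
`α`, `β`, and all hypotheses of Theorem 1.4 hold with the indicated `γ`. -/
theorem example_is_alpha_beta_contraction
    (F : ℝ → Set ℝ)
    (hF₁ : ∀ x : ℝ, 0 ≤ x → x < 3 / 4 → F x = {2 * x / 3})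
    (hF₂ : ∀ x : ℝ, 3 / 4 ≤ x → x < 1 → F x = {1 / 2})
    (hF₃ : F 1 = {1 / 3, 3 / 4})
    (α β γ : ℝ → ℝ)
    -- definition of α on [0,∞)
    (hα₁ : ∀ t : ℝ, 0 ≤ t → t ≤ 1 / 2 → α t = 4 / 3)
    (hα₂ : ∀ t : ℝ, 1 / 2 < t → α t = 8 / 3)
    -- definition of β on [0,∞)
    (hβ₁ : ∀ t : ℝ, 0 ≤ t → t ≤ 1 / 3 → β t = 2 / 3)
    (hβ₂ : ∀ t : ℝ, 1 / 3 < t → t ≤ 1 / 2 → β t = 1 / 2)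
    (hβ₃ : ∀ t : ℝ, 1 / 2 < t → β t = 1 / 3)
    -- definition of γ on (0,1]
    (hγ₁ : γ (1 / 3) = 1 / 3) (hγ₂ : γ (1 / 2) = 1 / 3) (hγ₃ : γ (2 / 3) = 5 / 3)
    (hγ₄ : ∀ t ∈ Set.Ioc (0 : ℝ) 1,
      t ≠ 1 / 3 → t ≠ 1 / 2 → t ≠ 2 / 3 → γ t = 0) :
    -- F is an (α,β)-mapping of [0,1] into itself ...
    (∀ x ∈ Set.Icc (0 : ℝ) 1, ∃ y ∈ F x,
      dist x y ≤ α (dist x y) * Metric.infDist x (F x) ∧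
      Metric.infDist y (F y) ≤ β (dist x y) * dist x y) ∧
    -- ... and in fact an (α,β)-contraction
    (∀ t > (0 : ℝ), α t * β t < 1) ∧
    -- β has property (MT)
    (∀ t : ℝ, 0 ≤ t → Filter.limsup β (nhdsWithin t (Set.Ioi t)) < 1) ∧
    -- α(t) ≤ 1 + γ(1 - β(t))
    (∀ t : ℝ, 0 ≤ t → α t ≤ 1 + γ (1 - β t)) ∧
    -- γ is bounded (and nonnegative) on (0,1]
    (∀ s ∈ Set.Ioc (0 : ℝ) 1, 0 ≤ γ s) ∧
    (∃ M : ℝ, ∀ s ∈ Set.Ioc (0 : ℝ) 1, γ s ≤ M) ∧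
    -- γ(s) → 0 as s → 0⁺
    Filter.Tendsto γ (nhdsWithin 0 (Set.Ioc (0 : ℝ) 1)) (nhds 0) ∧
    -- p(s) = s - (1-s)γ(s) is essentially positive on (0,1]
    (∀ a > (0 : ℝ), ∃ m > (0 : ℝ), ∀ s ∈ Set.Ioc (0 : ℝ) 1, a ≤ s →
      m ≤ s - (1 - s) * γ s) := by
  have hβb : ∀ t : ℝ, 0 ≤ t → 0 ≤ β t ∧ β t ≤ 2 / 3 := by
    intro t ht
    rcases le_or_gt t (1 / 3) with h | h
    · rw [hβ₁ t ht h]; norm_num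
    rcases le_or_gt t (1 / 2) with h' | h'
    · rw [hβ₂ t h h']; norm_num
    · rw [hβ₃ t h']; norm_num
  have hγc : ∀ s ∈ Set.Ioc (0 : ℝ) 1, (s = 1 / 3 ∧ γ s = 1 / 3) ∨ (s = 1 / 2 ∧ γ s = 1 / 3) ∨
      (s = 2 / 3 ∧ γ s = 5 / 3) ∨ γ s = 0 := by
    intro s hs
    by_cases h1 : s = 1 / 3
    · left; subst h1; exact ⟨rfl, hγ₁⟩
    by_cases h2 : s = 1 / 2
    · right; left; subst h2; exact ⟨rfl, hγ₂⟩
    by_cases h3 : s = 2 / 3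
    · right; right; left; subst h3; exact ⟨rfl, hγ₃⟩
    · right; right; right; exact hγ₄ s hs h1 h2 h3
  refine ⟨?_, ?_, ?_, ?_, ?_, ?_, ?_, ?_⟩
  · rintro x ⟨hx0, hx1⟩
    rcases lt_or_ge x (3 / 4) with h | h
    · refine ⟨2 * x / 3, by rw [hF₁ x hx0 h]; rfl, ?_⟩
      have hd : dist x (2 * x / 3) = x / 3 := by
        rw [Real.dist_eq, abs_of_nonneg (by linarith)]; ring
      have hd2 : dist (2 * x / 3) (2 * (2 * x / 3) / 3) = 2 * x / 9 := by
        rw [Real.dist_eq, abs_of_nonneg (by linarith)]; ring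
      rw [hF₁ x hx0 h, hF₁ (2 * x / 3) (by linarith) (by linarith), Metric.infDist_singleton,
        Metric.infDist_singleton, hd, hd2, hα₁ _ (by linarith) (by linarith),
        hβ₁ _ (by linarith) (by linarith)]
      constructor <;> linarith
    rcases lt_or_eq_of_le hx1 with h1 | h1
    · refine ⟨1 / 2, by rw [hF₂ x h h1]; rfl, ?_⟩
      have hd : dist x (1 / 2) = x - 1 / 2 := by
        rw [Real.dist_eq, abs_of_nonneg (by linarith)]
      have hd2 : dist (1 / 2 : ℝ) (2 * (1 / 2) / 3) = 1 / 6 := by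
        rw [Real.dist_eq, abs_of_nonneg (by norm_num)]; norm_num
      rw [hF₂ x h h1, hF₁ (1 / 2) (by norm_num) (by norm_num), Metric.infDist_singleton,
        Metric.infDist_singleton, hd, hd2, hα₁ _ (by linarith) (by linarith)]
      refine ⟨by linarith, ?_⟩
      rcases le_or_gt (x - 1 / 2) (1 / 3) with h' | h'
      · rw [hβ₁ _ (by linarith) h']; linarith
      · rw [hβ₂ _ h' (by linarith)]; linarith
    · subst h1
      refine ⟨1 / 3, by rw [hF₃]; simp, ?_⟩
      have hd : dist (1 : ℝ) (1 / 3) = 2 / 3 := by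
        rw [Real.dist_eq, abs_of_nonneg (by norm_num)]; norm_num
      have hd2 : dist (1 / 3 : ℝ) (2 * (1 / 3) / 3) = 1 / 9 := by
        rw [Real.dist_eq, abs_of_nonneg (by norm_num)]; norm_num
      have hd3 : dist (1 : ℝ) (3 / 4) = 1 / 4 := by
        rw [Real.dist_eq, abs_of_nonneg (by norm_num)]; norm_num
      have hi : 1 / 4 ≤ Metric.infDist (1 : ℝ) {1 / 3, 3 / 4} := by
        rw [Metric.le_infDist (by simp)]
        intro y hy
        rcases hy with hy | hy
        · rw [hy, hd]; norm_num
        · rw [Set.mem_singleton_iff.mp hy, hd3]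
      rw [hF₃, hF₁ (1 / 3) (by norm_num) (by norm_num), Metric.infDist_singleton, hd, hd2,
        hα₂ _ (by norm_num), hβ₃ _ (by norm_num)]
      constructor <;> linarith
  · intro t ht
    rcases le_or_gt t (1 / 3) with h | h
    · rw [hβ₁ t ht.le h, hα₁ t ht.le (by linarith)]; norm_num
    rcases le_or_gt t (1 / 2) with h' | h'
    · rw [hβ₂ t h h', hα₁ t ht.le h']; norm_num
    · rw [hβ₃ t h', hα₂ t h']; norm_num
  · intro t ht
    have hle : ∀ᶠ s in nhdsWithin t (Set.Ioi t), β s ≤ 2 / 3 := by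
      filter_upwards [self_mem_nhdsWithin] with s hs
      exact (hβb s (ht.trans (le_of_lt hs))).2
    have hge : ∀ᶠ s in nhdsWithin t (Set.Ioi t), 0 ≤ β s := by
      filter_upwards [self_mem_nhdsWithin] with s hs
      exact (hβb s (ht.trans (le_of_lt hs))).1
    have hb : Filter.IsBoundedUnder (· ≥ ·) (nhdsWithin t (Set.Ioi t)) β := ⟨0, hge⟩
    have := Filter.limsup_le_of_le hb.isCoboundedUnder_le hle
    linarith
  · intro t ht
    rcases le_or_gt t (1 / 3) with h | h
    · rw [hβ₁ t ht h, hα₁ t ht (by linarith), show (1 - 2 / 3 : ℝ) = 1 / 3 by norm_num, hγ₁]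
      norm_num
    rcases le_or_gt t (1 / 2) with h' | h'
    · rw [hβ₂ t h h', hα₁ t ht h', show (1 - 1 / 2 : ℝ) = 1 / 2 by norm_num, hγ₂]; norm_num
    · rw [hβ₃ t h', hα₂ t h', show (1 - 1 / 3 : ℝ) = 2 / 3 by norm_num, hγ₃]; norm_num
  · intro s hs
    rcases hγc s hs with h | h | h | h <;> [rw [h.2]; rw [h.2]; rw [h.2]; rw [h]] <;> norm_num
  · refine ⟨5 / 3, fun s hs => ?_⟩
    rcases hγc s hs with h | h | h | h <;> [rw [h.2]; rw [h.2]; rw [h.2]; rw [h]] <;> norm_num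
  · refine tendsto_const_nhds.congr' ?_
    have : ∀ᶠ s in nhdsWithin (0 : ℝ) (Set.Ioc (0 : ℝ) 1), s < 1 / 3 :=
      mem_nhdsWithin_of_mem_nhds (Iio_mem_nhds (by norm_num))
    filter_upwards [self_mem_nhdsWithin, this] with s hs h
    exact (hγ₄ s hs (ne_of_lt h) (by intro h'; linarith) (by intro h'; linarith)).symm
  · intro a ha
    refine ⟨min a (1 / 9), lt_min ha (by norm_num), fun s hs has => ?_⟩
    have h1 := min_le_left a (1 / 9)
    have h2 := min_le_right a (1 / 9)
    rcases hγc s hs with ⟨h, h'⟩ | ⟨h, h'⟩ | ⟨h, h'⟩ | h'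
    · rw [h', h]; linarith
    · rw [h', h]; linarith
    · rw [h', h]; linarith
    · rw [h']; linarith
end

section
/- Let m ≥ 1 be a natural number and let γ : (0,1] → (0,∞) satisfy γ(s) ≤ s + s² + ... + s^m for all s ∈ (0,1]. Let β : [0,∞) → [0,1) have property (MT) and let α : [0,∞) → [1,∞) satisfy α(t) ≤ 1 + γ(1−β(t)) for all t ≥ 0. Then every (α,β)-mapping F of a nonempty complete metric space (X,d) into itself with nonempty closed values whose distance function d_F is stably positive has a fixed point x* ∈ F(x*). (Indeed p(s) = s − (1−s)γ(s) ≥ s^{m+1} on (0,1], so the hypotheses of the main two-parameter fixed point theorem are satisfied.) -/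
/-- **Remark 3.3 (new fixed point theorems).** If `γ : (0,1] → (0,∞)` satisfies
`γ s ≤ s + s² + ⋯ + s^m`, `β` has property (MT) and `α t ≤ 1 + γ (1 - β t)`, then
every `(α,β)`-mapping of a nonempty complete metric space into itself with nonempty
closed values whose distance function is stably positive has a fixed point. -/
theorem fixed_point_of_polynomial_gamma
    {X : Type*} [MetricSpace X] [Nonempty X] [CompleteSpace X]
    (m : ℕ) (hm : 1 ≤ m)
    (γ : ℝ → ℝ)
    (hγpos : ∀ s ∈ Set.Ioc (0 : ℝ) 1, 0 < γ s)
    (hγle : ∀ s ∈ Set.Ioc (0 : ℝ) 1, γ s ≤ ∑ i ∈ Finset.range m, s ^ (i + 1))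
    (α β : ℝ → ℝ)
    (hα : ∀ t, 0 ≤ t → 1 ≤ α t)
    (hβ : ∀ t, 0 ≤ t → β t ∈ Set.Ico (0 : ℝ) 1)
    -- β has property (MT)
    (hMT : ∀ t, 0 ≤ t → Filter.limsup β (nhdsWithin t (Set.Ioi t)) < 1)
    (hαγ : ∀ t, 0 ≤ t → α t ≤ 1 + γ (1 - β t))
    (F : X → Set X)
    (hFne : ∀ x, (F x).Nonempty) (hFcl : ∀ x, IsClosed (F x))
    -- F is an (α,β)-mapping
    (hFab : ∀ x : X, ∃ y ∈ F x,
      dist x y ≤ α (dist x y) * Metric.infDist x (F x) ∧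
      Metric.infDist y (F y) ≤ β (dist x y) * dist x y)
    -- the distance function d_F is stably positive
    (hstab : ∀ x : X, 0 < Metric.infDist x (F x) →
      ∃ U ∈ nhds x, ∃ c > (0 : ℝ), ∀ y ∈ U, c ≤ Metric.infDist y (F y)) :
    ∃ x : X, x ∈ F x := by
  classical
  by_contra hno
  push Not at hno
  choose f hfF hf1 hf2 using hFab
  have hdpos : ∀ x, 0 < Metric.infDist x (F x) := fun x =>
    ((hFcl x).notMem_iff_infDist_pos (hFne x)).1 (hno x)
  obtain ⟨x0⟩ := ‹Nonempty X›
  set x : ℕ → X := fun n => f^[n] x0 with hx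
  have hxs : ∀ n, x (n + 1) = f (x n) := fun n => Function.iterate_succ_apply' f n x0
  obtain ⟨d, hd⟩ : ∃ d : ℕ → ℝ, ∀ n, d n = Metric.infDist (x n) (F (x n)) := ⟨_, fun _ => rfl⟩
  obtain ⟨t, ht⟩ : ∃ t : ℕ → ℝ, ∀ n, t n = dist (x n) (x (n + 1)) := ⟨_, fun _ => rfl⟩
  have hd0 : ∀ n, 0 < d n := fun n => by rw [hd]; exact hdpos _
  have ht0 : ∀ n, 0 ≤ t n := fun n => by rw [ht]; exact dist_nonneg
  have h1 : ∀ n, t n ≤ α (t n) * d n := fun n => by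
    rw [ht, hd, hxs]; exact hf1 _
  have h2 : ∀ n, d (n + 1) ≤ β (t n) * t n := fun n => by
    rw [ht, hd, hxs]; exact hf2 _
  have h3 : ∀ n, d n ≤ t n := fun n => by
    rw [ht, hd, hxs]; exact Metric.infDist_le_dist_of_mem (hfF _)
  have hs : ∀ n, 0 < 1 - β (t n) ∧ 1 - β (t n) ≤ 1 := fun n => by
    have := hβ _ (ht0 n)
    exact ⟨by linarith [this.2], by linarith [this.1]⟩
  have hαs : ∀ n, α (t n) ≤ 1 + m * (1 - β (t n)) := fun n => by
    have a := hαγ _ (ht0 n)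
    have b := hγle _ (hs n)
    have c : ∑ i ∈ Finset.range m, (1 - β (t n)) ^ (i + 1) ≤ ∑ i ∈ Finset.range m, (1 - β (t n)) :=
      Finset.sum_le_sum fun i _ => pow_le_of_le_one (hs n).1.le (hs n).2 (by omega)
    simp only [Finset.sum_const, Finset.card_range, nsmul_eq_mul] at c
    linarith
  have hαβ : ∀ n, α (t n) * β (t n) ≤ 1 - (1 - β (t n)) ^ (m + 1) := fun n => by
    have a := hαγ _ (ht0 n)
    have b := hγle _ (hs n)
    have e := geom_sum_mul_neg (1 - β (t n)) (m + 1)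
    rw [Finset.sum_range_succ', pow_zero, sub_sub_cancel] at e
    rw [← e]
    exact mul_le_mul_of_nonneg_right (by linarith) (hβ _ (ht0 n)).1
  have hdec : ∀ n, d (n + 1) ≤ (1 - (1 - β (t n)) ^ (m + 1)) * d n := fun n => by
    calc d (n + 1) ≤ β (t n) * t n := h2 n
      _ ≤ β (t n) * (α (t n) * d n) := mul_le_mul_of_nonneg_left (h1 n) (hβ _ (ht0 n)).1
      _ = (α (t n) * β (t n)) * d n := by ring
      _ ≤ _ := mul_le_mul_of_nonneg_right (hαβ n) (hd0 n).le
  have hlt : ∀ n, d (n + 1) < d n := fun n => by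
    have := mul_pos (pow_pos (hs n).1 (m + 1)) (hd0 n)
    linarith [hdec n]
  have hanti : Antitone d := antitone_nat_of_succ_le fun n => (hlt n).le
  have hbdd : BddBelow (Set.range d) := ⟨0, by rintro _ ⟨n, rfl⟩; exact (hd0 n).le⟩
  obtain ⟨D, hD⟩ : ∃ D, Filter.Tendsto d Filter.atTop (nhds D) :=
    ⟨_, tendsto_atTop_ciInf hanti hbdd⟩
  have hDle : ∀ n, D ≤ d n := fun n => hanti.le_of_tendsto hD n
  have hD0 : 0 ≤ D := ge_of_tendsto' hD fun n => (hd0 n).le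
  have htD : ∀ n, D < t n := fun n => by linarith [hDle (n + 1), hlt n, h3 n]
  -- key consequence of (MT)
  have key : Filter.Tendsto t Filter.atTop (nhds D) →
      ∃ b < 1, ∀ᶠ n in Filter.atTop, β (t n) < b := fun h => by
    obtain ⟨b, hb, hb1⟩ := exists_between (hMT D hD0)
    have hbd : Filter.IsBoundedUnder (· ≤ ·) (nhdsWithin D (Set.Ioi D)) β := by
      refine Filter.isBoundedUnder_of_eventually_le (a := 1) ?_
      filter_upwards [self_mem_nhdsWithin] with y hy
      exact (hβ y (hD0.trans (le_of_lt hy))).2.le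
    have ev := Filter.eventually_lt_of_limsup_lt hb hbd
    have h' : Filter.Tendsto t Filter.atTop (nhdsWithin D (Set.Ioi D)) :=
      tendsto_nhdsWithin_iff.2 ⟨h, Filter.Eventually.of_forall htD⟩
    exact ⟨b, hb1, h'.eventually ev⟩
  have hDz : D = 0 := by
    by_contra hne
    have hDp : 0 < D := lt_of_le_of_ne hD0 (Ne.symm hne)
    have hratio : Filter.Tendsto (fun n => 1 - d (n + 1) / d n) Filter.atTop (nhds 0) := by
      have := ((hD.comp (Filter.tendsto_add_atTop_nat 1)).div hD hne).const_sub 1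
      simpa [div_self hne] using this
    have hs0 : Filter.Tendsto (fun n => 1 - β (t n)) Filter.atTop (nhds 0) := by
      rw [tendsto_order]
      refine ⟨fun a ha => Filter.Eventually.of_forall fun n => ha.trans (hs n).1, fun e he => ?_⟩
      filter_upwards [hratio.eventually (gt_mem_nhds (pow_pos he (m + 1)))] with n hn
      refine lt_of_pow_lt_pow_left₀ (m + 1) he.le (lt_of_le_of_lt ?_ hn)
      have : d (n + 1) / d n ≤ 1 - (1 - β (t n)) ^ (m + 1) :=
        (div_le_iff₀ (hd0 n)).2 (hdec n)
      linarith
    have hup : Filter.Tendsto (fun n => (1 + m * (1 - β (t n))) * d n) Filter.atTop (nhds D) := by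
      have := ((hs0.const_mul (m : ℝ)).const_add 1).mul hD
      simpa using this
    have htt : Filter.Tendsto t Filter.atTop (nhds D) :=
      tendsto_of_tendsto_of_tendsto_of_le_of_le hD hup h3 fun n =>
        (h1 n).trans (mul_le_mul_of_nonneg_right (hαs n) (hd0 n).le)
    obtain ⟨b, hb, ev⟩ := key htt
    obtain ⟨n, hn1, hn2⟩ := (ev.and (hs0.eventually (gt_mem_nhds (sub_pos.2 hb)))).exists
    linarith
  have ht1 : ∀ n, t n ≤ (1 + m) * d n := fun n => by
    refine (h1 n).trans (mul_le_mul_of_nonneg_right ((hαs n).trans ?_) (hd0 n).le)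
    have : (m : ℝ) * (1 - β (t n)) ≤ m * 1 :=
      mul_le_mul_of_nonneg_left (hs n).2 (Nat.cast_nonneg m)
    linarith
  subst hDz
  have htt : Filter.Tendsto t Filter.atTop (nhds 0) := by
    have := hD.const_mul (1 + (m : ℝ))
    rw [mul_zero] at this
    exact squeeze_zero ht0 ht1 this
  obtain ⟨b, hb, ev⟩ := key htt
  obtain ⟨N, hN⟩ := Filter.eventually_atTop.1 ev
  have hb0 : 0 ≤ b := (hβ _ (ht0 N)).1.trans (hN N le_rfl).le
  set q : ℝ := 1 - (1 - b) ^ (m + 1) with hq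
  have hq1 : q < 1 := by
    have := pow_pos (sub_pos.2 hb) (m + 1)
    linarith
  have hq0 : 0 ≤ q := by
    have := pow_le_one₀ (n := m + 1) (sub_pos.2 hb).le (by linarith)
    linarith
  have hgeo : ∀ n, d (n + N) ≤ d N * q ^ n := fun n => by
    induction n with
    | zero => simp
    | succ k ih =>
      have a : d (k + N + 1) ≤ q * d (k + N) := by
        refine (hdec _).trans (mul_le_mul_of_nonneg_right ?_ (hd0 _).le)
        have := pow_le_pow_left₀ (sub_pos.2 hb).le
          (by linarith [hN (k + N) (by omega)] : 1 - b ≤ 1 - β (t (k + N))) (m + 1)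
        linarith
      rw [show k + 1 + N = k + N + 1 by omega]
      calc _ ≤ q * d (k + N) := a
        _ ≤ q * (d N * q ^ k) := mul_le_mul_of_nonneg_left ih hq0
        _ = _ := by ring
  have hc : CauchySeq (fun n => x (n + N)) := by
    refine cauchySeq_of_le_geometric q ((1 + m) * d N) hq1 fun n => ?_
    rw [show n + 1 + N = n + N + 1 by omega, ← ht, mul_assoc]
    exact (ht1 _).trans (mul_le_mul_of_nonneg_left (hgeo n) (by positivity))
  obtain ⟨z, hz⟩ := cauchySeq_tendsto_of_complete hc
  obtain ⟨U, hU, c, hc0, hcU⟩ := hstab z (hdpos z)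
  have hD' := hD.comp (Filter.tendsto_add_atTop_nat N)
  obtain ⟨n, hn1, hn2⟩ := ((hz.eventually hU).and (hD'.eventually (gt_mem_nhds hc0))).exists
  have := hcU _ hn1
  rw [← hd] at this
  simp only [Function.comp] at hn2
  linarith
end

section
/- Let C > 0, 0 < p < 1, and let t > 0 satisfy C·t^p < 1. Define the sequence (φ_n) recursively by φ_0 = t and φ_{n+1} = (1 − C·φ_n^p)·φ_n. Then φ_n > 0 for all n, φ_n^{−p} ≥ pC·n + t^{−p} for all n (equivalently φ_n ≤ (pC·n + t^{−p})^{−1/p}), and consequently the series ∑_{n=0}^∞ φ_n converges. -/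
/-- The numerical estimate in the proof of **Theorem 1.6**: for `C > 0`, `0 < p < 1`
and `t > 0` with `C·t^p < 1`, the recursively defined sequence `φ₀ = t`,
`φ_{n+1} = (1 - C·φₙ^p)·φₙ` is positive, satisfies `φₙ^{-p} ≥ pC·n + t^{-p}`
(equivalently `φₙ ≤ (pC·n + t^{-p})^{-1/p}`), and is summable. -/
theorem iterated_power_rate_sequence_summable
    (C p t : ℝ) (hC : 0 < C) (hp0 : 0 < p) (hp1 : p < 1)
    (ht : 0 < t) (htC : C * t ^ p < 1)
    (φ : ℕ → ℝ) (hφ0 : φ 0 = t)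
    (hφrec : ∀ n : ℕ, φ (n + 1) = (1 - C * φ n ^ p) * φ n) :
    (∀ n : ℕ, 0 < φ n) ∧
    (∀ n : ℕ, p * C * n + t ^ (-p) ≤ φ n ^ (-p)) ∧
    (∀ n : ℕ, φ n ≤ (p * C * n + t ^ (-p)) ^ (-(1 / p))) ∧
    Summable φ := by
  have key : ∀ n : ℕ, 0 < φ n ∧ C * φ n ^ p < 1 := by
    intro n
    induction n with
    | zero => rw [hφ0]; exact ⟨ht, htC⟩
    | succ k ih =>
      obtain ⟨h1, h2⟩ := ih
      have h3 : 0 < C * φ k ^ p := by positivity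
      have h4 : 0 < φ (k + 1) := by
        rw [hφrec]; exact mul_pos (by linarith) h1
      have h5 : φ (k + 1) ≤ φ k := by
        rw [hφrec]; nlinarith
      refine ⟨h4, lt_of_le_of_lt ?_ h2⟩
      exact mul_le_mul_of_nonneg_left (Real.rpow_le_rpow h4.le h5 hp0.le) hC.le
  have hpos : ∀ n, 0 < φ n := fun n => (key n).1
  have hlow : ∀ n : ℕ, p * C * n + t ^ (-p) ≤ φ n ^ (-p) := by
    intro n
    induction n with
    | zero => simp [hφ0]
    | succ k ih =>
      obtain ⟨h1, h2⟩ := key k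
      have h3 : 0 < C * φ k ^ p := by positivity
      have hb := rpow_one_add_le_one_add_mul_self (s := -(C * φ k ^ p)) (by linarith) hp0.le hp1.le
      rw [← sub_eq_add_neg] at hb
      have hq : 0 < (1 - C * φ k ^ p) ^ p := Real.rpow_pos_of_pos (by linarith) p
      have hinv : 1 + p * (C * φ k ^ p) ≤ (1 - C * φ k ^ p) ^ (-p) := by
        rw [Real.rpow_neg (by linarith), ← one_div, le_div_iff₀ hq]
        have : 0 < p * (C * φ k ^ p) := by positivity
        nlinarith
      have hone : φ k ^ p * φ k ^ (-p) = 1 := by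
        rw [← Real.rpow_add h1]; simp
      have hm : (0 : ℝ) < φ k ^ (-p) := Real.rpow_pos_of_pos h1 _
      rw [hφrec, Real.mul_rpow (by linarith) h1.le]
      have h6 := mul_le_mul_of_nonneg_right hinv hm.le
      have h7 : (1 + p * (C * φ k ^ p)) * φ k ^ (-p) = φ k ^ (-p) + p * C := by
        linear_combination p * C * hone
      push_cast
      linarith
  have htp : 0 < t ^ (-p) := Real.rpow_pos_of_pos ht _
  have hup : ∀ n : ℕ, φ n ≤ (p * C * n + t ^ (-p)) ^ (-(1 / p)) := by
    intro n
    have h1 : φ n = (φ n ^ (-p)) ^ (-(1 / p)) := by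
      rw [← Real.rpow_mul (hpos n).le]
      have : -p * -(1 / p) = 1 := by field_simp
      rw [this, Real.rpow_one]
    rw [h1]
    exact Real.rpow_le_rpow_of_nonpos (by positivity) (hlow n)
      (by have : 0 < 1 / p := by positivity
          linarith)
  refine ⟨hpos, hlow, hup, ?_⟩
  have hexp : 1 < 1 / p := by rw [lt_div_iff₀ hp0]; linarith
  have hs : Summable (fun n : ℕ => (n : ℝ) ^ (-(1 / p))) :=
    Real.summable_nat_rpow.2 (by linarith)
  rw [← summable_nat_add_iff 1]
  refine Summable.of_nonneg_of_le (fun n => (hpos _).le) (fun n => ?_)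
    (((summable_nat_add_iff 1).2 hs).mul_left ((p * C) ^ (-(1 / p))))
  refine (hup (n + 1)).trans ?_
  rw [← Real.mul_rpow (by positivity) (by positivity)]
  exact Real.rpow_le_rpow_of_nonpos (by positivity) (by linarith) (by linarith)
end

section
/- Let (X,d) be a metric space, α : [0,∞) → [1,∞) nonincreasing, and β : [0,∞) → [0,1) with α(t)·β(t) < 1 for all t > 0. Let F map X into nonempty closed subsets of X and let (x_n) be a sequence with x_{n+1} ∈ F(x_n) satisfying, with d_n = d(x_n, x_{n+1}): d_n ≤ α(d_n)·d_F(x_n) and d_F(x_{n+1}) ≤ β(d_n)·d_n for all n. Then the sequence (d_n) is nonincreasing: d_{n+1} ≤ d_n for all n. -/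
/-- The monotonicity step in the proof of **Theorem 1.5**: if `α` is nonincreasing,
`α t * β t < 1` for `t > 0`, and `(xₙ)` satisfies `x_{n+1} ∈ F(xₙ)` together with
conditions `(Aₙ)` and `(Bₙ)`, then the sequence `dₙ = d(xₙ, x_{n+1})` is
nonincreasing. -/
theorem step_distances_nonincreasing
    {X : Type*} [MetricSpace X]
    (α β : ℝ → ℝ)
    (hα : ∀ t, 0 ≤ t → 1 ≤ α t)
    (hβ : ∀ t, 0 ≤ t → β t ∈ Set.Ico (0 : ℝ) 1)
    -- α is nonincreasing on [0,∞)
    (hαmono : AntitoneOn α (Set.Ici 0))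
    (hcontr : ∀ t > (0 : ℝ), α t * β t < 1)
    (F : X → Set X)
    (hFne : ∀ x, (F x).Nonempty) (hFcl : ∀ x, IsClosed (F x))
    (x : ℕ → X)
    (horbit : ∀ n : ℕ, x (n + 1) ∈ F (x n))
    (hA : ∀ n : ℕ, dist (x n) (x (n + 1)) ≤
      α (dist (x n) (x (n + 1))) * Metric.infDist (x n) (F (x n)))
    (hB : ∀ n : ℕ, Metric.infDist (x (n + 1)) (F (x (n + 1))) ≤
      β (dist (x n) (x (n + 1))) * dist (x n) (x (n + 1))) :
    ∀ n : ℕ, dist (x (n + 1)) (x (n + 2)) ≤ dist (x n) (x (n + 1)) := by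
  intro n
  by_contra! hlt
  have h1 := hA (n + 1)
  have h2 := hB n
  have ha : 0 ≤ dist (x n) (x (n + 1)) := dist_nonneg
  rw [show n + 1 + 1 = n + 2 from rfl] at h1
  generalize dist (x n) (x (n + 1)) = a at *
  generalize dist (x (n + 1)) (x (n + 2)) = b at *
  generalize Metric.infDist (x (n + 1)) (F (x (n + 1))) = D at *
  have hb : 0 ≤ b := ha.trans hlt.le
  have hm : α b ≤ α a := hαmono (Set.mem_Ici.2 ha) (Set.mem_Ici.2 hb) hlt.le
  have hαb : 0 ≤ α b := zero_le_one.trans (hα b hb)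
  have hβa : 0 ≤ β a * a := mul_nonneg (hβ a ha).1 ha
  have h3 : b ≤ α a * β a * a := by
    calc b ≤ α b * D := h1
      _ ≤ α b * (β a * a) := mul_le_mul_of_nonneg_left h2 hαb
      _ ≤ α a * (β a * a) := mul_le_mul_of_nonneg_right hm hβa
      _ = α a * β a * a := by ring
  rcases ha.eq_or_lt with h0 | h0
  · rw [← h0] at h3 hlt
    simp only [mul_zero] at h3
    linarith
  · have := mul_lt_mul_of_pos_right (hcontr a h0) h0
    linarith
end
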